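/- arXiv:1802.03846 — 2 statements merged into one kernel-verified Lean document; each statement's English description precedes it below -/
import Mathlib

section
/- Let C → D and D → B be ring homomorphisms such that D → B is surjective with kernel I. Suppose B is an integral domain, the conormal module I/I² is a finitely generated free B-module, and the first homology H¹(L_{B/C}) of the (naive) cotangent complex of B over C is a torsion B-module. Then the Jacobi–Zariski sequence 0 → I/I² → B ⊗_D Ω¹_{D/C} → Ω¹_{B/C} → 0 is a short exact sequence; in particular the natural map I/I² → B ⊗_D Ω¹_{D/C} is injective. -/
open KaehlerDifferential TensorProduct

universe u

/-!
The extension `0 → I → D → B → 0` has its own first homology, namely the kernel of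
`I/I² → B ⊗[D] Ω[D⁄C]`. The comparison with the free presentation of `B` over `C` maps
`H¹(L_{B/C})` onto this kernel, which is therefore torsion. Being a submodule of the torsion-free
module `I/I²`, it vanishes.
-/

section Torsion

variable {R M : Type*} [AddCommMonoid M]

theorem isTorsion_of_surjective {N : Type*} [CommSemiring R] [Module R M] [AddCommMonoid N]
    [Module R N] (f : M →ₗ[R] N) (hf : Function.Surjective f) (hM : Module.IsTorsion R M) :
    Module.IsTorsion R N := by
  intro y
  obtain ⟨x, rfl⟩ := hf y
  obtain ⟨a, ha⟩ := @hM x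
  exact ⟨a, by rw [Submonoid.smul_def, ← map_smul, ← Submonoid.smul_def, ha, map_zero]⟩

theorem subsingleton_of_isTorsion_of_isTorsionFree [CommRing R] [Module R M]
    [Module.IsTorsionFree R M] (hM : Module.IsTorsion R M) : Subsingleton M := by
  refine subsingleton_of_forall_eq 0 fun x ↦ ?_
  obtain ⟨a, ha⟩ := @hM x
  exact (isRegular_iff_mem_nonZeroDivisors.mpr a.2).smul_eq_zero_iff_right.mp ha

end Torsion

section Extension

variable {R S : Type*} [CommRing R] [CommRing S] [Algebra R S] (P : Algebra.Extension R S)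

theorem isTorsion_extension_h1Cotangent (h : Module.IsTorsion S (Algebra.H1Cotangent R S)) :
    Module.IsTorsion S P.H1Cotangent :=
  isTorsion_of_surjective _ (Algebra.Extension.H1Cotangent.map_defaultHom_surjective P) h

theorem cotangentComplex_injective_of_isTorsion_h1Cotangent [Module.IsTorsionFree S P.Cotangent]
    (h : Module.IsTorsion S (Algebra.H1Cotangent R S)) :
    Function.Injective P.cotangentComplex := by
  have : Module.IsTorsionFree S P.H1Cotangent :=
    P.h1Cotangentι_injective.moduleIsTorsionFree _ (map_smul _)
  exact P.subsingleton_h1Cotangent.mp <|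
    subsingleton_of_isTorsion_of_isTorsionFree (isTorsion_extension_h1Cotangent P h)

end Extension

section Surjective

variable {A B : Type*} [CommRing A] [CommRing B] [Algebra A B]

theorem kerCotangentToTensor_injective_of_isTorsion_h1Cotangent {R : Type*} [CommRing R]
    [Algebra R A] [Algebra R B] [IsScalarTower R A B]
    [Module B (RingHom.ker (algebraMap A B)).Cotangent]
    [IsScalarTower A B (RingHom.ker (algebraMap A B)).Cotangent]
    [Module.IsTorsionFree B (RingHom.ker (algebraMap A B)).Cotangent]
    (hsurj : Function.Surjective (algebraMap A B))
    (h : Module.IsTorsion B (Algebra.H1Cotangent R B)) :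
    Function.Injective (kerCotangentToTensor R A B) := by
  let P : Algebra.Extension R B := ⟨A, _, Function.surjInv_eq hsurj⟩
  let e : P.Cotangent →ₗ[B] (RingHom.ker (algebraMap A B)).Cotangent :=
    P.cotangentEquivCotangentKer.toLinearMap.extendScalarsOfSurjective hsurj
  have he : Function.Injective e := P.cotangentEquivCotangentKer.injective
  have : Module.IsTorsionFree B P.Cotangent := he.moduleIsTorsionFree e (map_smul e)
  exact cotangentComplex_injective_of_isTorsion_h1Cotangent P h

/-- The `B`-module structure on the conormal module `I/I²` of a surjection `A → B` with kernel `I`,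
transported from its `A ⧸ I`-module structure along `A ⧸ I ≃+* B`. It depends on a proof of
surjectivity, so it is not a global instance. -/
noncomputable abbrev kerCotangentModule (hsurj : Function.Surjective (algebraMap A B)) :
    Module B (RingHom.ker (algebraMap A B)).Cotangent :=
  Module.compHom _ (RingHom.quotientKerEquivOfSurjective hsurj).symm.toRingHom

theorem kerCotangentModule_isScalarTower (hsurj : Function.Surjective (algebraMap A B)) :
    letI := kerCotangentModule hsurj
    IsScalarTower A B (RingHom.ker (algebraMap A B)).Cotangent := by
  let := kerCotangentModule hsurj
  refine IsScalarTower.of_algebraMap_smul fun a x ↦ ?_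
  have ha : (RingHom.quotientKerEquivOfSurjective hsurj).symm (algebraMap A B a) =
      Ideal.Quotient.mk _ a :=
    (RingEquiv.symm_apply_eq _).mpr rfl
  calc algebraMap A B a • x
    _ = (RingHom.quotientKerEquivOfSurjective hsurj).symm (algebraMap A B a) • x := rfl
    _ = Ideal.Quotient.mk (RingHom.ker (algebraMap A B)) a • x := by rw [ha]
    _ = a • x := rfl

end Surjective

theorem statement_5_general {C D B : Type*} [CommRing C] [CommRing D] [CommRing B]
    [Algebra C D] [Algebra D B] [Algebra C B] [IsScalarTower C D B]
    (hsurj : Function.Surjective (algebraMap D B))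
    (htf :
      letI := kerCotangentModule hsurj
      Module.IsTorsionFree B (RingHom.ker (algebraMap D B)).Cotangent)
    (htors : Module.IsTorsion B (Algebra.H1Cotangent C B)) :
    Function.Injective (kerCotangentToTensor C D B) ∧
      Function.Exact (kerCotangentToTensor C D B) (mapBaseChange C D B) ∧
      Function.Surjective (mapBaseChange C D B) := by
  let := kerCotangentModule hsurj
  have := kerCotangentModule_isScalarTower hsurj
  exact ⟨kerCotangentToTensor_injective_of_isTorsion_h1Cotangent hsurj htors,
    exact_kerCotangentToTensor_mapBaseChange C D B hsurj, mapBaseChange_surjective C D B hsurj⟩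

theorem statement_5 (C D B : Type u) [CommRing C] [CommRing D] [CommRing B]
    [Algebra C D] [Algebra D B] [Algebra C B] [IsScalarTower C D B]
    [IsDomain B]
    (hsurj : Function.Surjective (algebraMap D B))
    (hfree :
      letI : Module B (RingHom.ker (algebraMap D B)).Cotangent :=
        Module.compHom _ ((RingHom.quotientKerEquivOfSurjective hsurj).symm.toRingHom)
      Module.Free B (RingHom.ker (algebraMap D B)).Cotangent ∧
        Module.Finite B (RingHom.ker (algebraMap D B)).Cotangent)
    (htors : Module.IsTorsion B (Algebra.H1Cotangent C B)) :
    Function.Injective (kerCotangentToTensor C D B) ∧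
      Function.Exact (kerCotangentToTensor C D B) (mapBaseChange C D B) ∧
      Function.Surjective (mapBaseChange C D B) := by
  have := hfree.1
  exact statement_5_general hsurj inferInstance htors
end

section
/- Let k be a field and let T be a connected scheme locally of finite type over k whose local rings are normal (integral domains integrally closed in their fields of fractions) and which admits a k-rational point t ∈ T(k). Then T is geometrically connected over k: for every field extension K of k, the base change T ×_{Spec k} Spec K is connected. -/
open AlgebraicGeometry CategoryTheory Limits

universe u

/-!
It is enough that some geometrically connected scheme `Y`, here the rational point, maps to `T`.
Let `Ω` be an algebraic closure of `k`. The projection `T_Ω ⟶ T` is open and closed, so every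
nonempty clopen subset of `T_Ω` surjects onto `T` and therefore meets the connected image of `Y_Ω`;
hence no two such subsets are complementary. No further extension of `Ω` disconnects anything:
a nonzero element of a finitely generated `Ω`-domain survives at some `Ω`-point, so domains over `Ω`
have a domain as tensor product and every field over `Ω` is geometrically connected. Finally,
geometric connectedness descends along the surjection `Spec Ω ⟶ Spec k`.
-/

open scoped TensorProduct

section TensorProduct

theorem exists_algHom_apply_ne_zero_of_not_isNilpotent {k A : Type*} [Field k] [IsAlgClosed k]
    [CommRing A] [Algebra k A] [Algebra.FiniteType k A] {a : A} (ha : ¬IsNilpotent a) :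
    ∃ φ : A →ₐ[k] k, φ a ≠ 0 := by
  have : IsJacobsonRing A := isJacobsonRing_of_finiteType (A := k)
  obtain ⟨m, hm, ham⟩ : ∃ m : Ideal A, m.IsMaximal ∧ a ∉ m := by
    rw [← mem_nilradical, nilradical, Ideal.radical_eq_jacobson, Ideal.jacobson,
      Submodule.mem_sInf] at ha
    push Not at ha
    obtain ⟨m, ⟨-, hm⟩, ham⟩ := ha
    exact ⟨m, hm, ham⟩
  let := Ideal.Quotient.field m
  have : Module.Finite k (A ⧸ m) := finite_of_finite_type_of_isJacobsonRing _ _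
  let e : k ≃ₐ[k] A ⧸ m :=
    .ofBijective (Algebra.ofId _ _) IsAlgClosed.algebraMap_bijective_of_isIntegral
  refine ⟨(e.symm : A ⧸ m →ₐ[k] k).comp (Ideal.Quotient.mkₐ k m), fun h ↦ ham ?_⟩
  exact Ideal.Quotient.eq_zero_iff_mem.mp (e.symm.map_eq_zero_iff.mp h)

theorem exists_ne_zero_forall_lTensor_apply_ne_zero {R V M N : Type*} [CommSemiring R]
    [AddCommMonoid V] [Module R V] [Module.Free R V] [AddCommMonoid M] [Module R M]
    [AddCommMonoid N] [Module R N] {x : V ⊗[R] M} (hx : x ≠ 0) :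
    ∃ m : M, m ≠ 0 ∧ ∀ f : M →ₗ[R] N, f m ≠ 0 → f.lTensor V x ≠ 0 := by
  let b := Module.Free.chooseBasis R V
  have hcoord (f : M →ₗ[R] N) (y : V ⊗[R] M) (i) :
      TensorProduct.equivFinsuppOfBasisLeft b (f.lTensor V y) i =
        f (TensorProduct.equivFinsuppOfBasisLeft b y i) := by
    induction y with
    | zero => simp
    | add y z hy hz => simp [hy, hz]
    | tmul v m => simp
  obtain ⟨i, hi⟩ := Finsupp.ne_iff.mp
    ((TensorProduct.equivFinsuppOfBasisLeft b).map_ne_zero_iff.mpr hx)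
  refine ⟨_, hi, fun f hf h ↦ hf ?_⟩
  rw [← hcoord, h, map_zero, Finsupp.zero_apply]

theorem noZeroDivisors_tensorProduct_of_finiteType {k A B : Type*} [Field k] [IsAlgClosed k]
    [CommRing A] [NoZeroDivisors A] [Algebra k A]
    [CommRing B] [NoZeroDivisors B] [Algebra k B] [Algebra.FiniteType k B] :
    NoZeroDivisors (A ⊗[k] B) where
  eq_zero_or_eq_zero_of_mul_eq_zero {x y} hxy := by
    by_contra! h
    obtain ⟨b, hb, hx⟩ := exists_ne_zero_forall_lTensor_apply_ne_zero (N := k) h.1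
    obtain ⟨c, hc, hy⟩ := exists_ne_zero_forall_lTensor_apply_ne_zero (N := k) h.2
    obtain ⟨φ, hφ⟩ := exists_algHom_apply_ne_zero_of_not_isNilpotent (k := k)
      (mt IsNilpotent.eq_zero (mul_ne_zero hb hc))
    rw [map_mul] at hφ
    have : NoZeroDivisors (A ⊗[k] k) :=
      (Algebra.TensorProduct.rid k k A).injective.noZeroDivisors _ (map_zero _) (map_mul _)
    let ψ : A ⊗[k] B →ₐ[A] A ⊗[k] k := Algebra.TensorProduct.map (.id A A) φ
    have hψ : ψ x * ψ y = 0 := by rw [← map_mul, hxy, map_zero]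
    exact mul_ne_zero (hx φ.toLinearMap (left_ne_zero_of_mul hφ))
      (hy φ.toLinearMap (right_ne_zero_of_mul hφ)) hψ

theorem subalgebra_baseChange_mono {R A B : Type*} [CommSemiring R] [CommSemiring A]
    [CommSemiring B] [Algebra R A] [Algebra R B] {C D : Subalgebra R B} (h : C ≤ D) :
    C.baseChange A ≤ D.baseChange A := by
  have hcomp : Algebra.TensorProduct.map (.id A A) C.val =
      (Algebra.TensorProduct.map (.id A A) D.val).comp
        (Algebra.TensorProduct.map (.id A A) (Subalgebra.inclusion h)) := by
    ext; simp
  rw [Subalgebra.baseChange, hcomp]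
  exact AlgHom.range_comp_le_range _ _

theorem noZeroDivisors_tensorProduct_of_forall_fg {R A B : Type*} [CommSemiring R]
    [CommSemiring A] [CommSemiring B] [Algebra R A] [Algebra R B] [Module.Flat R A]
    (h : ∀ C : Subalgebra R B, C.FG → NoZeroDivisors (A ⊗[R] C)) : NoZeroDivisors (A ⊗[R] B) where
  eq_zero_or_eq_zero_of_mul_eq_zero {x y} hxy := by
    obtain ⟨C, hC, hx⟩ := exists_fg_and_mem_baseChange x
    obtain ⟨D, hD, hy⟩ := exists_fg_and_mem_baseChange y
    have : NoZeroDivisors (A ⊗[R] ↥(C ⊔ D)) := h _ (hC.sup hD)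
    let ι := Algebra.TensorProduct.map (.id A A) (C ⊔ D).val
    have hι : Function.Injective ι :=
      Module.Flat.lTensor_preserves_injective_linearMap _ Subtype.val_injective
    obtain ⟨x, rfl⟩ : ∃ x', ι x' = x := subalgebra_baseChange_mono le_sup_left hx
    obtain ⟨y, rfl⟩ : ∃ y', ι y' = y := subalgebra_baseChange_mono le_sup_right hy
    rw [← map_mul] at hxy
    simpa only [map_eq_zero_iff ι hι, mul_eq_zero] using hxy

theorem isDomain_tensorProduct_of_isAlgClosed {k A B : Type*} [Field k] [IsAlgClosed k]
    [CommRing A] [IsDomain A] [Algebra k A] [CommRing B] [IsDomain B] [Algebra k B] :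
    IsDomain (A ⊗[k] B) :=
  have : NoZeroDivisors (A ⊗[k] B) := noZeroDivisors_tensorProduct_of_forall_fg fun C hC ↦
    have : Algebra.FiniteType k C := C.fg_iff_finiteType.mp hC
    noZeroDivisors_tensorProduct_of_finiteType
  NoZeroDivisors.to_isDomain _

end TensorProduct

theorem preconnectedSpace_of_isOpenMap_of_isClosedMap {X T : Type*} [TopologicalSpace X]
    [TopologicalSpace T] [PreconnectedSpace T] {p : X → T} (ho : IsOpenMap p) (hc : IsClosedMap p)
    {C : Set X} (hC : IsPreconnected C) {t : T} (ht : p ⁻¹' {t} ⊆ C) : PreconnectedSpace X := by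
  have hmeet {U : Set X} (hU : IsClopen U) (hne : U.Nonempty) : (C ∩ U).Nonempty := by
    have himage : p '' U = Set.univ :=
      IsClopen.eq_univ ⟨hc _ hU.isClosed, ho _ hU.isOpen⟩ (hne.image p)
    obtain ⟨x, hx, hxt⟩ : t ∈ p '' U := himage ▸ Set.mem_univ t
    exact ⟨x, ht hxt, hx⟩
  refine preconnectedSpace_iff_clopen.mpr fun U hU ↦ ?_
  by_contra! h
  obtain ⟨x, hxC, hxU⟩ := hmeet hU.compl (Set.nonempty_compl.mpr h.2)
  exact hxU (hC.subset_isClopen hU (hmeet hU h.1) hxC)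

section Scheme

variable {S S' T X Y : Scheme.{u}}

theorem connectedSpace_of_connectedSpace_pullback (g : Y ⟶ T) (p : X ⟶ T) (ho : IsOpenMap p)
    (hc : IsClosedMap p) [PreconnectedSpace T] [ConnectedSpace ↥(pullback g p)] :
    ConnectedSpace X := by
  obtain ⟨z⟩ := (inferInstance : Nonempty ↥(pullback g p))
  have hz : g (pullback.fst g p z) = p (pullback.snd g p z) := by
    rw [← Scheme.Hom.comp_apply, pullback.condition, Scheme.Hom.comp_apply]
  have hfiber : p ⁻¹' {p (pullback.snd g p z)} ⊆ Set.range (pullback.snd g p) := fun x hx ↦ by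
    obtain ⟨w, -, hw⟩ := Scheme.Pullback.exists_preimage_pullback (pullback.fst g p z) x
      (hz.trans hx.symm)
    exact ⟨w, hw⟩
  have : PreconnectedSpace X := preconnectedSpace_of_isOpenMap_of_isClosedMap ho hc
    (isPreconnected_range (pullback.snd g p).continuous) hfiber
  exact ⟨⟨pullback.snd g p z⟩⟩

theorem geometricallyConnected_of_isIso (f : X ⟶ S) [IsIso f] : GeometricallyConnected f := by
  refine ⟨geometrically_iff_of_isClosedUnderIsomorphisms.mpr fun K _ y ↦ ?_⟩
  exact (pullback.snd f y).homeomorph.connectedSpace_iff.mpr inferInstance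

theorem geometricallyConnected_of_pullback_snd (f : X ⟶ S) (h : S' ⟶ S) [Surjective h]
    [GeometricallyConnected (pullback.snd f h)] : GeometricallyConnected f := by
  refine ⟨geometrically_iff_of_isClosedUnderIsomorphisms.mpr fun K _ y ↦ ?_⟩
  -- The residue field `κ` of a point of `Spec K ×[S] S'` is an extension of `K` lying over `S'`.
  obtain ⟨z⟩ : Nonempty ↥(pullback y h) := (pullback.fst y h).surjective.nonempty
  let κ := (pullback y h).residueField z
  let q : Spec κ ⟶ Spec (.of K) := (pullback y h).fromSpecResidueField z ≫ pullback.fst y h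
  let q' : Spec κ ⟶ S' := (pullback y h).fromSpecResidueField z ≫ pullback.snd y h
  have hq : q' ≫ h = q ≫ y := by simp only [q, q', Category.assoc, pullback.condition]
  let e : pullback (pullback.snd f h) q' ≅ pullback (pullback.snd f y) q :=
    pullbackLeftPullbackSndIso f h q' ≪≫ pullback.congrHom rfl hq ≪≫
      (pullbackLeftPullbackSndIso f y q).symm
  have : ConnectedSpace ↥(pullback (pullback.snd f h) q') :=
    pullback_of_geometrically GeometricallyConnected.geometrically_connectedSpace κ q'
  have : ConnectedSpace ↥(pullback (pullback.snd f y) q) :=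
    e.hom.homeomorph.connectedSpace_iff.mp this
  exact (pullback.fst (pullback.snd f y) q).surjective.connectedSpace
    (pullback.fst (pullback.snd f y) q).continuous

theorem geometricallyConnected_Spec_map_of_isAlgClosed (k A : Type u) [Field k] [IsAlgClosed k]
    [CommRing A] [IsDomain A] [Algebra k A] :
    GeometricallyConnected (Spec.map (CommRingCat.ofHom (algebraMap k A))) := by
  refine ⟨geometrically_iff_of_commRing_of_isClosedUnderIsomorphisms.mpr fun K _ _ ↦ ?_⟩
  have : IsDomain (A ⊗[k] K) := isDomain_tensorProduct_of_isAlgClosed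
  have : ConnectedSpace (Spec (.of (A ⊗[k] K))) := inferInstance
  exact (pullbackSpecIso k A K).hom.homeomorph.connectedSpace_iff.mpr this

theorem geometricallyConnected_of_isAlgClosed {k : Type u} [Field k] [IsAlgClosed k]
    (f : X ⟶ Spec (.of k)) [ConnectedSpace X] : GeometricallyConnected f := by
  refine ⟨geometrically_iff_of_commRing_of_isClosedUnderIsomorphisms.mpr fun K _ _ ↦ ?_⟩
  have : GeometricallyConnected (Spec.map (CommRingCat.ofHom (algebraMap k K))) :=
    geometricallyConnected_Spec_map_of_isAlgClosed k K
  infer_instance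

theorem geometricallyConnected_of_comp {k : Type u} [Field k] (g : Y ⟶ T) (f : T ⟶ Spec (.of k))
    [ConnectedSpace T] [GeometricallyConnected (g ≫ f)] : GeometricallyConnected f := by
  let x := Spec.map (CommRingCat.ofHom (algebraMap k (AlgebraicClosure k)))
  have : IsIntegralHom x :=
    IsIntegralHom.SpecMap_iff.mpr (algebraMap_isIntegral_iff.mpr inferInstance)
  have : ConnectedSpace ↥(pullback g (pullback.fst f x)) :=
    (pullbackRightPullbackFstIso f x g).hom.homeomorph.connectedSpace_iff.mpr inferInstance
  have : ConnectedSpace ↥(pullback f x) := connectedSpace_of_connectedSpace_pullback g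
    (pullback.fst f x) (pullback.fst f x).isOpenMap (pullback.fst f x).isClosedMap
  have : GeometricallyConnected (pullback.snd f x) := geometricallyConnected_of_isAlgClosed _
  exact geometricallyConnected_of_pullback_snd f x

end Scheme

theorem statement_9_general {k : Type u} [Field k] {T : Scheme.{u}} (f : T ⟶ Spec (.of k))
    [ConnectedSpace T] (t : Spec (.of k) ⟶ T) (ht : t ≫ f = 𝟙 _) : GeometricallyConnected f := by
  have : GeometricallyConnected (t ≫ f) := ht ▸ geometricallyConnected_of_isIso (𝟙 _)
  exact geometricallyConnected_of_comp t f

theorem statement_9 (k : Type u) [Field k] (T : Scheme.{u})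
    (fT : T ⟶ Spec (CommRingCat.of k)) [LocallyOfFiniteType fT]
    (hconn : ConnectedSpace T)
    (hnormal : ∀ t : T, IsDomain (T.presheaf.stalk t) ∧
      IsIntegrallyClosed (T.presheaf.stalk t))
    (t : Spec (CommRingCat.of k) ⟶ T) (ht : t ≫ fT = 𝟙 (Spec (CommRingCat.of k)))
    (K : Type u) [Field K] [Algebra k K] :
    ConnectedSpace ((pullback fT (Spec.map (CommRingCat.ofHom (algebraMap k K))) : Scheme.{u}) : Type u) := by
  have : GeometricallyConnected fT := statement_9_general fT t ht
  exact pullback_of_geometrically GeometricallyConnected.geometrically_connectedSpace K _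
end
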